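/- Fix finite-dimensional subspaces X_n of W and G_n of G, and assume that for every x ∈ X_n there exists g ∈ G with x + g ∈ V. Let μ > 0 and let ξ ∈ V be such that u_V(i ξ) = μ ξ (so that i ξ is an eigenvector of R_V with eigenvalue μ, realized in V). Then, with u_n := u_{V_n}(i ξ) the discrete solution for the datum i ξ, for every v ∈ V_n one has ‖μ ξ − u_n‖_W ≤ μ ‖ξ − v‖_W; that is, ‖u_V(i ξ) − u_{V_n}(i ξ)‖_W ≤ μ · dist_W(ξ, V_n). -/

import Mathlib

open scoped InnerProductSpace

/-!
`μ • ξ` satisfies the equation defining the solution operator not only against `V` but also against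
`G`, where both sides vanish. Every correctable discrete field lies in `V ⊔ G`, so although
`Vₙ ⊄ V` in general, the discretization is conforming in `V ⊔ G`: the discrete solution is the
orthogonal projection of `μ • ξ` onto `Vₙ`, hence at least as close to it as the competitor `μ • v`.
-/

theorem le_sup_of_forall_exists_add_mem {R M : Type*} [Ring R] [AddCommGroup M] [Module R M]
    {X V G : Submodule R M} (h : ∀ x ∈ X, ∃ g ∈ G, x + g ∈ V) : X ≤ V ⊔ G := by
  intro x hx
  obtain ⟨g, hg, hxg⟩ := h x hx
  exact Submodule.mem_sup.2 ⟨x + g, hxg, -g, G.neg_mem hg, add_neg_cancel_right x g⟩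

section VariationalProblem

variable {𝕜 H W : Type*} [RCLike 𝕜] [SeminormedAddCommGroup H] [InnerProductSpace 𝕜 H]
  [SeminormedAddCommGroup W] [InnerProductSpace 𝕜 W]

theorem norm_le_norm_add_of_inner_eq_zero {x y : W} (h : ⟪x, y⟫_𝕜 = 0) : ‖x‖ ≤ ‖x + y‖ := by
  refine (mul_self_le_mul_self_iff (norm_nonneg _) (norm_nonneg _)).2 ?_
  rw [norm_add_sq_eq_norm_sq_add_norm_sq_of_inner_eq_zero x y h]
  exact le_add_of_nonneg_right (mul_self_nonneg _)

variable (i : W →ₗ[𝕜] H)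

/-- A subspace `G` of `W` is of gradient type if the inner products of `W` and `H` agree whenever
one argument is in `G`. It abstracts `∇H¹₀(Ω) ⊆ H₀(curl; Ω)`, on which the curl vanishes. -/
def IsGradientType (G : Submodule 𝕜 W) : Prop :=
  ∀ w : W, ∀ g ∈ G, ⟪w, g⟫_𝕜 = ⟪i w, i g⟫_𝕜

/-- The fields that are weakly divergence-free relative to `G`, i.e. `H`-orthogonal to `G`: the
space `V` for the full space of gradients, and the side condition in `Vₙ` for `Gₙ`. -/
def divergenceFree (G : Submodule 𝕜 W) : Submodule 𝕜 W where
  carrier := {w | ∀ g ∈ G, ⟪i w, i g⟫_𝕜 = 0}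
  zero_mem' g _ := by rw [map_zero, inner_zero_left]
  add_mem' hv hw g hg := by rw [map_add, inner_add_left, hv g hg, hw g hg, add_zero]
  smul_mem' c w hw g hg := by rw [map_smul, inner_smul_left, hw g hg, mul_zero]

/-- `u` is a solution in `S` of the variational problem with datum `f`, the relation `u = u_S(f)`.
It is encoded by the defining equation, so that no Riesz representation of `f` need exist. -/
structure IsVariationalSolution (S : Submodule 𝕜 W) (f : H) (u : W) : Prop where
  mem : u ∈ S
  inner_eq : ∀ v ∈ S, ⟪u, v⟫_𝕜 = ⟪f, i v⟫_𝕜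

variable {i} {G S T : Submodule 𝕜 W} {f : H} {u uₙ v : W}

namespace IsVariationalSolution

theorem inner_sub_eq_zero (hu : IsVariationalSolution i T f u)
    (hun : IsVariationalSolution i S f uₙ) (hST : S ≤ T) (hv : v ∈ S) : ⟪u - uₙ, v⟫_𝕜 = 0 := by
  rw [inner_sub_left, hu.inner_eq v (hST hv), hun.inner_eq v hv, sub_self]

theorem norm_sub_le_norm_sub (hu : IsVariationalSolution i T f u)
    (hun : IsVariationalSolution i S f uₙ) (hST : S ≤ T) (hv : v ∈ S) :
    ‖u - uₙ‖ ≤ ‖u - v‖ := by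
  have galerkin_orthogonality : ⟪u - uₙ, uₙ - v⟫_𝕜 = 0 :=
    hu.inner_sub_eq_zero hun hST (S.sub_mem hun.mem hv)
  simpa only [sub_add_sub_cancel] using norm_le_norm_add_of_inner_eq_zero galerkin_orthogonality

theorem divergenceFree_sup (hu : IsVariationalSolution i (divergenceFree i G) f u)
    (hG : IsGradientType i G) (hf : ∀ g ∈ G, ⟪f, i g⟫_𝕜 = 0) :
    IsVariationalSolution i (divergenceFree i G ⊔ G) f u where
  mem := Submodule.mem_sup_left hu.mem
  inner_eq w hw := by
    obtain ⟨v, hv, g, hg, rfl⟩ := Submodule.mem_sup.1 hw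
    have inner_gradient : ⟪u, g⟫_𝕜 = ⟪f, i g⟫_𝕜 := by rw [hG u g hg, hu.mem g hg, hf g hg]
    rw [map_add, inner_add_right, inner_add_right, hu.inner_eq v hv, inner_gradient]

end IsVariationalSolution

theorem stmt_10_general {μ : 𝕜} {ξ : W} (hG : IsGradientType i G)
    (hS : S ≤ divergenceFree i G ⊔ G) (hξ : ξ ∈ divergenceFree i G)
    (hEig : IsVariationalSolution i (divergenceFree i G) (i ξ) (μ • ξ))
    (hun : IsVariationalSolution i S (i ξ) uₙ) (hv : v ∈ S) :
    ‖μ • ξ - uₙ‖ ≤ ‖μ‖ * ‖ξ - v‖ :=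
  calc ‖μ • ξ - uₙ‖ ≤ ‖μ • ξ - μ • v‖ :=
        (hEig.divergenceFree_sup hG hξ).norm_sub_le_norm_sub hun hS (S.smul_mem μ hv)
    _ = ‖μ‖ * ‖ξ - v‖ := by rw [← smul_sub, norm_smul]

end VariationalProblem

/-- Setting: `H`, `W` real Hilbert spaces, `i : W → H` continuous
linear with `‖i w‖ ≤ ‖w‖`, `G` a gradient-type closed subspace,
`V := {w : ∀ g ∈ G, ⟪i w, i g⟫ = 0}`, `Xn ≤ W` and `Gn ≤ G` finite-dimensional,
`Vn := {w ∈ Xn + Gn : ∀ g ∈ Gn, ⟪i w, i g⟫ = 0}`; assume every `x ∈ Xn` can be corrected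
by some `g ∈ G` so that `x + g ∈ V`.  Let `μ > 0` and `ξ ∈ V` with `u_V(i ξ) = μ • ξ`
(so `i ξ` is an eigenvector of `R_V` with eigenvalue `μ`, realized in `V`).  Then, with
`un := u_{Vn}(i ξ)` the discrete solution for the datum `i ξ`, for every `v ∈ Vn` one has
`‖μ • ξ − un‖_W ≤ μ ‖ξ − v‖_W`. -/
theorem stmt_10
    {H W : Type*} [NormedAddCommGroup H] [InnerProductSpace ℝ H] [CompleteSpace H]
    [NormedAddCommGroup W] [InnerProductSpace ℝ W] [CompleteSpace W]
    (i : W →L[ℝ] H) (hi : ∀ w : W, ‖i w‖ ≤ ‖w‖)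
    (G : Submodule ℝ W) (hGclosed : IsClosed (G : Set W))
    (hG : ∀ w : W, ∀ g ∈ G, ⟪w, g⟫_ℝ = ⟪i w, i g⟫_ℝ)
    (Xn : Submodule ℝ W) (hXnfin : FiniteDimensional ℝ Xn)
    (Gn : Submodule ℝ W) (hGnG : Gn ≤ G) (hGnfin : FiniteDimensional ℝ Gn)
    (hcorrect : ∀ x ∈ Xn, ∃ g ∈ G, ∀ g' ∈ G, ⟪i (x + g), i g'⟫_ℝ = 0)
    (μ : ℝ) (hμ : 0 < μ)
    (ξ : W) (hξV : ∀ g ∈ G, ⟪i ξ, i g⟫_ℝ = 0)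
    (hEig : ∀ v : W, (∀ g ∈ G, ⟪i v, i g⟫_ℝ = 0) → ⟪μ • ξ, v⟫_ℝ = ⟪i ξ, i v⟫_ℝ)
    (un : W) (hunmem : un ∈ Xn ⊔ Gn) (hunorth : ∀ g ∈ Gn, ⟪i un, i g⟫_ℝ = 0)
    (hun : ∀ v ∈ Xn ⊔ Gn, (∀ g ∈ Gn, ⟪i v, i g⟫_ℝ = 0) →
      ⟪un, v⟫_ℝ = ⟪i ξ, i v⟫_ℝ) :
    ∀ v ∈ Xn ⊔ Gn, (∀ g ∈ Gn, ⟪i v, i g⟫_ℝ = 0) →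
      ‖μ • ξ - un‖ ≤ μ * ‖ξ - v‖ := by
  intro v hv hvo
  have hVn : (Xn ⊔ Gn) ⊓ divergenceFree i.toLinearMap Gn ≤ divergenceFree i.toLinearMap G ⊔ G :=
    inf_le_left.trans (sup_le (le_sup_of_forall_exists_add_mem hcorrect) (le_sup_of_le_right hGnG))
  simpa only [Real.norm_of_nonneg hμ.le] using stmt_10_general hG hVn hξV
    ⟨Submodule.smul_mem _ μ hξV, hEig⟩ ⟨⟨hunmem, hunorth⟩, fun w hw => hun w hw.1 hw.2⟩ ⟨hv, hvo⟩
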